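/- Fix integers τ ≥ 1 and K > τ. If the sampling sequence has staleness bounded by τ up to horizon K, then for every k with τ ≤ k ≤ K−1, the SAG direction satisfies ‖g_k‖² ≤ 2‖∇f(x_k)‖² + 8 L² τ α² · U_k, where U_k := Σ_{j=1}^τ ‖g_{k−j}‖². -/

import Mathlib

/-!
Overwriting the stored gradient of the sampled component before averaging shows that `g k` is the
mean of the updated table `h i (k + 1)`. Each entry of that table is a gradient evaluated at an
iterate from the sampling window or at `x k` itself, so by smoothness it is within
`L * α * ∑ ‖g t‖` of the current gradient, the sum running over the window. Hence
`‖g k - ∇ f (x k)‖` obeys the same bound, and `(a + b) ^ 2 ≤ 2 * (a ^ 2 + b ^ 2)` together with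
Cauchy–Schwarz on the sum gives the claim, even with the constant `2` in place of `8`.
-/

open Finset
open scoped NNReal Gradient ComplexConjugate

section Gradient

variable {𝕜 E ι : Type*} [RCLike 𝕜] [NormedAddCommGroup E] [InnerProductSpace 𝕜 E]
  [CompleteSpace E] {x : E}

theorem gradient_fun_sum {s : Finset ι} {f : ι → E → 𝕜}
    (hf : ∀ i ∈ s, DifferentiableAt 𝕜 (f i) x) :
    ∇ (fun z ↦ ∑ i ∈ s, f i z) x = ∑ i ∈ s, ∇ (f i) x := by
  simp only [gradient, fderiv_fun_sum hf, map_sum]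

theorem gradient_fun_div_const {f : E → 𝕜} (hf : DifferentiableAt 𝕜 f x) (c : 𝕜) :
    ∇ (fun z ↦ f z / c) x = (conj c)⁻¹ • ∇ f x := by
  simp only [gradient, div_eq_inv_mul, fderiv_const_mul hf, map_smulₛₗ, map_inv₀]

end Gradient

theorem norm_inv_card_smul_sum_le {ι E : Type*} [Fintype ι] [Nonempty ι]
    [SeminormedAddCommGroup E] [NormedSpace ℝ E] {v : ι → E} {C : ℝ} (hv : ∀ i, ‖v i‖ ≤ C) :
    ‖(Fintype.card ι : ℝ)⁻¹ • ∑ i, v i‖ ≤ C := by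
  have hsum : ‖∑ i, v i‖ ≤ Fintype.card ι * C := by
    simpa using norm_sum_le_of_le univ fun i _ ↦ hv i
  rw [norm_smul, norm_inv, Real.norm_natCast]
  exact inv_mul_le_of_le_mul₀ (by positivity) ((norm_nonneg _).trans (hv (Classical.arbitrary ι)))
    hsum

theorem sum_Icc_one_comp_sub {M : Type*} [AddCommMonoid M] (u : ℕ → M) {n k : ℕ} (hnk : n ≤ k) :
    ∑ j ∈ Icc 1 n, u (k - j) = ∑ t ∈ Ico (k - n) k, u t := by
  rw [← Ico_add_one_right_eq_Icc, sum_Ico_reflect u 1 (Nat.add_le_add_right hnk 1)]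
  simp

/-- A run of the stochastic average gradient method with step size `α`, where the `i`-th component
gradient is an arbitrary map `G i`. Before iteration `k` the table entry `h i k` is the value stored
for component `i`; iteration `k` samples component `idx k` and moves from `x k` along `- g k`.
The initial values `x 0` and `h i 0` are arbitrary. -/
structure IsSAGRun {ι E : Type*} [Fintype ι] [DecidableEq ι] [AddCommGroup E] [Module ℝ E]
    (G : ι → E → E) (α : ℝ) (idx : ℕ → ι) (x g : ℕ → E) (h : ι → ℕ → E) : Prop where
  table_succ : ∀ i k, h i (k + 1) = if idx k = i then G i (x k) else h i k
  direction_eq : ∀ k, g k = (Fintype.card ι : ℝ)⁻¹ • ∑ i, h i k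
    + (Fintype.card ι : ℝ)⁻¹ • (G (idx k) (x k) - h (idx k) k)
  iterate_succ : ∀ k, x (k + 1) = x k - α • g k

namespace IsSAGRun

section Module

variable {ι E : Type*} [Fintype ι] [DecidableEq ι] [AddCommGroup E] [Module ℝ E]
  {G : ι → E → E} {α : ℝ} {idx : ℕ → ι} {x g : ℕ → E} {h : ι → ℕ → E}

theorem exists_table_eq (hrun : IsSAGRun G α idx x g h) {j k : ℕ} (hjk : j < k) :
    ∃ t ∈ Ico j k, h (idx j) k = G (idx j) (x t) := by
  induction k, hjk using Nat.le_induction with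
  | base => exact ⟨j, by simp, by simp [hrun.table_succ]⟩
  | succ k hjk ih =>
    by_cases hsampled : idx k = idx j
    · exact ⟨k, mem_Ico.2 ⟨by lia, by lia⟩, by rw [hrun.table_succ, if_pos hsampled]⟩
    · obtain ⟨t, ht, hstored⟩ := ih
      exact ⟨t, Ico_subset_Ico_right k.le_succ ht,
        by rw [hrun.table_succ, if_neg hsampled, hstored]⟩

theorem direction_eq_mean_table_succ (hrun : IsSAGRun G α idx x g h) (k : ℕ) :
    g k = (Fintype.card ι : ℝ)⁻¹ • ∑ i, h i (k + 1) := by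
  have hupdate : ∀ i, h i (k + 1) = h i k + if idx k = i then G i (x k) - h i k else 0 := by
    intro i
    rw [hrun.table_succ]
    split_ifs <;> simp
  rw [hrun.direction_eq, ← smul_add]
  simp [hupdate, sum_add_distrib]

end Module

variable {ι E : Type*} [Fintype ι] [DecidableEq ι] [SeminormedAddCommGroup E] [NormedSpace ℝ E]
  {G : ι → E → E} {α : ℝ} {idx : ℕ → ι} {x g : ℕ → E} {h : ι → ℕ → E} {L : ℝ≥0} {m k : ℕ}

theorem dist_iterate_le (hrun : IsSAGRun G α idx x g h) (hmk : m ≤ k) :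
    dist (x m) (x k) ≤ |α| * ∑ t ∈ Ico m k, ‖g t‖ := by
  rw [mul_sum]
  refine dist_le_Ico_sum_of_dist_le hmk fun _ _ ↦ ?_
  simp [hrun.iterate_succ, norm_smul]

theorem norm_table_succ_sub_le (hrun : IsSAGRun G α idx x g h) {i : ι}
    (hG : LipschitzWith L (G i)) (hsampled : ∃ j ∈ Ico m k, idx j = i) :
    ‖h i (k + 1) - G i (x k)‖ ≤ L * (|α| * ∑ t ∈ Ico m k, ‖g t‖) := by
  obtain ⟨j, hj, rfl⟩ := hsampled
  obtain ⟨hmj, hjk⟩ := mem_Ico.1 hj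
  obtain ⟨t, ht, hstored⟩ := hrun.exists_table_eq (hjk.trans k.lt_succ_self)
  obtain ⟨hjt, htk⟩ := mem_Ico.1 ht
  rw [hstored, ← dist_eq_norm]
  calc dist (G (idx j) (x t)) (G (idx j) (x k))
      ≤ L * dist (x t) (x k) := hG.dist_le_mul _ _
    _ ≤ L * (|α| * ∑ s ∈ Ico t k, ‖g s‖) := by
      gcongr
      exact hrun.dist_iterate_le (Nat.le_of_lt_succ htk)
    _ ≤ L * (|α| * ∑ s ∈ Ico m k, ‖g s‖) := by
      gcongr
      exact hmj.trans hjt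

theorem norm_direction_sub_mean_le (hrun : IsSAGRun G α idx x g h)
    (hG : ∀ i, LipschitzWith L (G i)) (hsampled : ∀ i, ∃ j ∈ Ico m k, idx j = i) :
    ‖g k - (Fintype.card ι : ℝ)⁻¹ • ∑ i, G i (x k)‖ ≤ L * (|α| * ∑ t ∈ Ico m k, ‖g t‖) := by
  have : Nonempty ι := ⟨idx 0⟩
  rw [hrun.direction_eq_mean_table_succ, ← smul_sub, ← sum_sub_distrib]
  exact norm_inv_card_smul_sum_le fun i ↦ hrun.norm_table_succ_sub_le (hG i) (hsampled i)

theorem norm_direction_sq_le (hrun : IsSAGRun G α idx x g h)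
    (hG : ∀ i, LipschitzWith L (G i)) (hsampled : ∀ i, ∃ j ∈ Ico m k, idx j = i) :
    ‖g k‖ ^ 2 ≤ 2 * ‖(Fintype.card ι : ℝ)⁻¹ • ∑ i, G i (x k)‖ ^ 2
      + 2 * L ^ 2 * (k - m : ℕ) * α ^ 2 * ∑ t ∈ Ico m k, ‖g t‖ ^ 2 := by
  set mean := (Fintype.card ι : ℝ)⁻¹ • ∑ i, G i (x k)
  have hcauchy : (∑ t ∈ Ico m k, ‖g t‖) ^ 2 ≤ (k - m : ℕ) * ∑ t ∈ Ico m k, ‖g t‖ ^ 2 := by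
    simpa using sq_sum_le_card_mul_sum_sq (s := Ico m k) (f := fun t ↦ ‖g t‖)
  calc ‖g k‖ ^ 2
      ≤ (‖mean‖ + ‖g k - mean‖) ^ 2 := by
        gcongr
        exact norm_le_norm_add_norm_sub' _ _
    _ ≤ 2 * (‖mean‖ ^ 2 + ‖g k - mean‖ ^ 2) := add_sq_le
    _ ≤ 2 * (‖mean‖ ^ 2 + (L * (|α| * ∑ t ∈ Ico m k, ‖g t‖)) ^ 2) := by
        gcongr
        exact hrun.norm_direction_sub_mean_le hG hsampled
    _ = 2 * ‖mean‖ ^ 2 + 2 * L ^ 2 * α ^ 2 * (∑ t ∈ Ico m k, ‖g t‖) ^ 2 := by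
        rw [mul_pow, mul_pow, sq_abs]
        ring
    _ ≤ 2 * ‖mean‖ ^ 2
          + 2 * L ^ 2 * α ^ 2 * ((k - m : ℕ) * ∑ t ∈ Ico m k, ‖g t‖ ^ 2) := by gcongr
    _ = _ := by ring

end IsSAGRun

theorem sag_direction_bound_general {ι E : Type*} [Fintype ι] [DecidableEq ι]
    [NormedAddCommGroup E] [InnerProductSpace ℝ E] [CompleteSpace E]
    {F : ι → E → ℝ} {f : E → ℝ} {L : ℝ≥0} {α : ℝ} {idx : ℕ → ι} {x g : ℕ → E} {h : ι → ℕ → E}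
    (hdiff : ∀ i, Differentiable ℝ (F i)) (hsmooth : ∀ i, LipschitzWith L (∇ (F i)))
    (hf : ∀ z, f z = (∑ i, F i z) / Fintype.card ι)
    (hrun : IsSAGRun (fun i ↦ ∇ (F i)) α idx x g h)
    {τ k : ℕ} (hτk : τ ≤ k) (hsampled : ∀ i, ∃ j ∈ Ico (k - τ) k, idx j = i) :
    ‖g k‖ ^ 2 ≤ 2 * ‖∇ f (x k)‖ ^ 2
      + 2 * L ^ 2 * τ * α ^ 2 * ∑ j ∈ Icc 1 τ, ‖g (k - j)‖ ^ 2 := by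
  have hgrad : ∇ f (x k) = (Fintype.card ι : ℝ)⁻¹ • ∑ i, ∇ (F i) (x k) := by
    rw [funext hf, gradient_fun_div_const (by fun_prop),
      gradient_fun_sum fun i _ ↦ (hdiff i).differentiableAt, conj_trivial]
  rw [hgrad, sum_Icc_one_comp_sub (fun t ↦ ‖g t‖ ^ 2) hτk]
  simpa only [Nat.sub_sub_self hτk] using hrun.norm_direction_sq_le hsmooth hsampled

/- STATEMENT 5 (SAG direction norm bound under bounded staleness). -/
theorem sag_direction_bound (d N : ℕ) (hd : 1 ≤ d) (hN : 1 ≤ N) (L : ℝ) (hL : 0 < L)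
    (fi : Fin N → EuclideanSpace ℝ (Fin d) → ℝ)
    (hdiff : ∀ i, Differentiable ℝ (fi i))
    (hsmooth : ∀ i x y, ‖gradient (fi i) x - gradient (fi i) y‖ ≤ L * ‖x - y‖)
    (f : EuclideanSpace ℝ (Fin d) → ℝ)
    (hf : ∀ z, f z = (∑ i, fi i z) / N)
    (idx : ℕ → Fin N) (α : ℝ) (hα : 0 < α)
    (x g : ℕ → EuclideanSpace ℝ (Fin d))
    (h : Fin N → ℕ → EuclideanSpace ℝ (Fin d))
    (hx0 : x 0 = 0)
    (hh0 : ∀ i, h i 0 = 0)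
    (hhrec : ∀ i k, h i (k + 1) = if idx k = i then gradient (fi i) (x k) else h i k)
    (hg : ∀ k, g k = (N : ℝ)⁻¹ • (∑ i, h i k)
      + (N : ℝ)⁻¹ • (gradient (fi (idx k)) (x k) - h (idx k) k))
    (hxrec : ∀ k, x (k + 1) = x k - α • g k)
    (τ K : ℕ) (hτ : 1 ≤ τ) (hK : τ < K)
    (hstale : ∀ i : Fin N, ∀ k : ℕ, τ ≤ k → k ≤ K - 1 →
      ∃ j : ℕ, k - τ ≤ j ∧ j < k ∧ idx j = i) :
    ∀ k : ℕ, τ ≤ k → k ≤ K - 1 →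
      ‖g k‖ ^ 2 ≤ 2 * ‖gradient f (x k)‖ ^ 2
        + 8 * L ^ 2 * τ * α ^ 2 * ∑ j ∈ Finset.Icc 1 τ, ‖g (k - j)‖ ^ 2 := by
  intro k hτk hkK
  lift L to ℝ≥0 using hL.le
  have hrun : IsSAGRun (fun i ↦ ∇ (fi i)) α idx x g h :=
    ⟨hhrec, by simpa only [Fintype.card_fin] using hg, hxrec⟩
  have hsampled : ∀ i, ∃ j ∈ Ico (k - τ) k, idx j = i := fun i ↦ by
    simpa only [mem_Ico, and_assoc] using hstale i k hτk hkK
  refine (sag_direction_bound_general hdiff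
    (fun i ↦ lipschitzWith_iff_norm_sub_le.2 (hsmooth i))
    (by simpa only [Fintype.card_fin] using hf) hrun hτk hsampled).trans ?_
  gcongr
  norm_num
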